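/- Let 𝒫 be a simple type system on Ω that is atomic quasinuclear but not branching. Then there is a finite subset D of 𝔠 consisting of rational (eventually periodic) points of the same tail class such that Stab_V(𝒫) equals the setwise stabilizer Stab_V(D), and this is a maximal subgroup of Thompson's group V. -/

import Mathlib

/-!
In the nonbranching case every address in `𝒬` has exactly one child in `𝒬`, the other child lying
in the absorbing type `ℛ`. Let `D` (`limitSet`) be the set of points all of whose prefixes of
length at least `t` lie in `𝒬`. A point of `D` is determined by its prefix of length `t`
(`limitSet_ext`), so `D` is finite, and every address in `𝒬` is a prefix of a point of `D`
(`exists_path`). Strong connectivity of `𝒬` means that the unique path through `𝒬` from one type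
passes through every other type and returns to its start, so the points of `D` are eventually
periodic and share a tail class.

An element of `V` stabilizing `𝒫` maps long addresses in `𝒬` to addresses in `𝒬`, since the
children of an address in `ℛ` have the same type and those of an address in `𝒬` do not; hence it
preserves `D`. Conversely, the relation `∀ w, αw ∈ D ↔ βw ∈ D` is a type system, is a
quotient of `𝒫`, and is not universal, so by simplicity it is the relation of `𝒫`. An element of
`V` preserving `D` clearly respects it.

Maximality (`isMaximal_setStab`) holds for every finite nonempty subset of a tail class: by
swapping small cones (`exists_point_swap`), `V` can exchange any two points of the class while
fixing finitely many others, and the stabilizer of a finite subset is then maximal by an exchange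
argument on subsets of the same size.
-/

/-- Addresses: finite words over the alphabet `{0,1}` (`Bool`). -/
abbrev Addr : Type := List Bool

/-- Cantor space: infinite words over the alphabet `{0,1}`. -/
abbrev Cantor : Type := ℕ → Bool

/-- Prepend the finite word `α` to the infinite word `w`. -/
def wcat (α : Addr) (w : Cantor) : Cantor := fun n =>
  if h : n < α.length then α.get ⟨n, h⟩ else w (n - α.length)

/-- The cone of the address `α`: the set of infinite words having `α` as a prefix. -/
def cone (α : Addr) : Set Cantor := Set.range (wcat α)

/-- `g` is a prefix substitution map: there are partitions of Cantor space into cones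
`(A i)𝔠` and `(B i)𝔠` such that `g` maps `(A i) w` to `(B i) w`. -/
def IsPrefixSubst (g : Equiv.Perm Cantor) : Prop :=
  ∃ (n : ℕ) (A B : Fin n → Addr),
    (∀ i j, i ≠ j → Disjoint (cone (A i)) (cone (A j))) ∧
    (⋃ i, cone (A i)) = Set.univ ∧
    (∀ i j, i ≠ j → Disjoint (cone (B i)) (cone (B j))) ∧
    (⋃ i, cone (B i)) = Set.univ ∧
    (∀ i w, g (wcat (A i) w) = wcat (B i) w)

/-- Thompson's group `V`, as the set of prefix substitution maps inside `Equiv.Perm Cantor`. -/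
def VSet : Set (Equiv.Perm Cantor) := { g | IsPrefixSubst g }

/-- `α ^ g = β` : `g` maps the cone of `α` onto the cone of `β` by the prefix
substitution `α ↦ β`. -/
def actsOn (g : Equiv.Perm Cantor) (α β : Addr) : Prop :=
  ∀ w, g (wcat α w) = wcat β w

/-- A subset of `Equiv.Perm Cantor` that is closed under the group operations. -/
def IsSubgroupSet (M : Set (Equiv.Perm Cantor)) : Prop :=
  (1 : Equiv.Perm Cantor) ∈ M ∧ (∀ g ∈ M, ∀ h ∈ M, g * h ∈ M) ∧ ∀ g ∈ M, g⁻¹ ∈ M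

/-- `M` is a maximal subgroup of Thompson's group `V`. -/
def IsMaximalSubgroupOfV (M : Set (Equiv.Perm Cantor)) : Prop :=
  IsSubgroupSet M ∧ M ⊆ VSet ∧ M ≠ VSet ∧
    ∀ H : Set (Equiv.Perm Cantor),
      IsSubgroupSet H → M ⊆ H → H ⊆ VSet → H = M ∨ H = VSet

/-- A relation on addresses is coherent if `α ∼ β` implies `α0 ∼ β0` and `α1 ∼ β1`. -/
def Coherent (r : Addr → Addr → Prop) : Prop :=
  ∀ α β, r α β → r (α ++ [false]) (β ++ [false]) ∧ r (α ++ [true]) (β ++ [true])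

/-- A relation on addresses is reduced if `α0 ∼ β0` and `α1 ∼ β1` imply `α ∼ β`. -/
def Reduced (r : Addr → Addr → Prop) : Prop :=
  ∀ α β, r (α ++ [false]) (β ++ [false]) → r (α ++ [true]) (β ++ [true]) → r α β

/-- A type system: a coherent and reduced equivalence relation on addresses
(identified with the partition of `Ω` into its classes). -/
def IsTypeSystem (r : Addr → Addr → Prop) : Prop :=
  Equivalence r ∧ Coherent r ∧ Reduced r

/-- `g` fixes the parts of `r`: for all but finitely many addresses `α`, the image
`α ^ g` is defined and equivalent to `α`. -/
def FixesParts (r : Addr → Addr → Prop) (g : Equiv.Perm Cantor) : Prop :=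
  { α : Addr | ¬ ∃ β, actsOn g α β ∧ r α β }.Finite

/-- `g` stabilizes `r`: on some cofinite set of addresses, `α ^ g` is defined and `g`
preserves equivalence and inequivalence of addresses. -/
def Stabilizes (r : Addr → Addr → Prop) (g : Equiv.Perm Cantor) : Prop :=
  ∃ Ω₀ : Set Addr, Ω₀ᶜ.Finite ∧ (∀ α ∈ Ω₀, ∃ β, actsOn g α β) ∧
    ∀ α ∈ Ω₀, ∀ α' ∈ Ω₀, ∀ β β', actsOn g α β → actsOn g α' β' → (r α α' ↔ r β β')

/-- `Fix_V(𝒫)`: the elements of Thompson's group `V` fixing the parts of `r`. -/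
def FixSet (r : Addr → Addr → Prop) : Set (Equiv.Perm Cantor) :=
  { g | IsPrefixSubst g ∧ FixesParts r g }

/-- `Stab_V(𝒫)`: the elements of Thompson's group `V` stabilizing `r`. -/
def StabSet (r : Addr → Addr → Prop) : Set (Equiv.Perm Cantor) :=
  { g | IsPrefixSubst g ∧ Stabilizes r g }

/-- The type system of `s` is a quotient of that of `r`. -/
def IsQuotientOf (s r : Addr → Addr → Prop) : Prop :=
  IsTypeSystem s ∧ ∀ α β, r α β → s α β

/-- A simple type system: the universal relation is a proper quotient, and every
quotient is either the type system itself or the universal one. -/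
def SimpleTS (r : Addr → Addr → Prop) : Prop :=
  IsTypeSystem r ∧ (∃ α β : Addr, ¬ r α β) ∧
    ∀ s : Addr → Addr → Prop, IsQuotientOf s r →
      (∀ α β, s α β ↔ r α β) ∨ ∀ α β, s α β

/-- The type (equivalence class) of the address `α`. -/
def typeOf (r : Addr → Addr → Prop) (α : Addr) : Set Addr := { β | r α β }

/-- `S` is a union of `r`-classes, i.e. a set of types of the type system. -/
def Saturated (r : Addr → Addr → Prop) (S : Set Addr) : Prop :=
  ∀ α ∈ S, ∀ β, r α β → β ∈ S

/-- `S` is child-closed: with each address (type) it contains both of its children. -/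
def ChildClosed (S : Set Addr) : Prop :=
  ∀ α ∈ S, α ++ [false] ∈ S ∧ α ++ [true] ∈ S

/-- The word `γ` determines a path through `S` from (the type of) `α`. -/
def PathThrough (S : Set Addr) (α γ : Addr) : Prop :=
  ∀ ζ : Addr, ζ <+: γ → α ++ ζ ∈ S

/-- `S` is strongly connected. -/
def StronglyConnected (r : Addr → Addr → Prop) (S : Set Addr) : Prop :=
  ∀ α ∈ S, ∀ β ∈ S, ∃ γ : Addr, γ ≠ [] ∧ PathThrough S α γ ∧ r (α ++ γ) β

/-- A nucleus: a (nonempty) child-closed and strongly connected set of types. -/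
def IsNucleus (r : Addr → Addr → Prop) (S : Set Addr) : Prop :=
  S.Nonempty ∧ Saturated r S ∧ ChildClosed S ∧ StronglyConnected r S

/-- `S` consists of exactly one type. -/
def IsSingleType (r : Addr → Addr → Prop) (S : Set Addr) : Prop :=
  ∃ α : Addr, S = typeOf r α

/-- A multinuclear type system: finitely many pairwise disjoint nuclei containing the
types of all sufficiently long addresses. -/
def Multinuclear (r : Addr → Addr → Prop) : Prop :=
  ∃ (k : ℕ) (Q : Fin k → Set Addr), 0 < k ∧ (∀ i, IsNucleus r (Q i)) ∧
    (∀ i j, i ≠ j → Disjoint (Q i) (Q j)) ∧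
    ∃ t : ℕ, 0 < t ∧ ∀ α : Addr, t ≤ α.length → ∃ i, α ∈ Q i

/-- A nuclear type system: a single nucleus containing the types of all sufficiently
long addresses. -/
def Nuclear (r : Addr → Addr → Prop) : Prop :=
  ∃ Q : Set Addr, IsNucleus r Q ∧ ∃ t : ℕ, 0 < t ∧ ∀ α : Addr, t ≤ α.length → α ∈ Q

/-- An atomic binuclear type system: two disjoint singleton nuclei containing the types
of all sufficiently long addresses. -/
def AtomicBinuclear (r : Addr → Addr → Prop) : Prop :=
  ∃ Q₁ Q₂ : Set Addr, IsNucleus r Q₁ ∧ IsNucleus r Q₂ ∧ Disjoint Q₁ Q₂ ∧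
    IsSingleType r Q₁ ∧ IsSingleType r Q₂ ∧
    ∃ t : ℕ, 0 < t ∧ ∀ α : Addr, t ≤ α.length → α ∈ Q₁ ∪ Q₂

/-- The data `(𝒬, ℛ)` witnessing that a type system is quasinuclear. -/
def QuasinuclearData (r : Addr → Addr → Prop) (Q R : Set Addr) : Prop :=
  Q.Nonempty ∧ R.Nonempty ∧ Saturated r Q ∧ Saturated r R ∧ Disjoint Q R ∧
    (∃ t : ℕ, 0 < t ∧ ∀ α : Addr, t ≤ α.length → α ∈ Q ∪ R) ∧
    IsNucleus r R ∧ StronglyConnected r Q ∧ ChildClosed (Q ∪ R) ∧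
    ∀ α ∈ Q, ∀ β ∈ R, ∃ γ : Addr, r (α ++ γ) β

/-- A quasinuclear type system. -/
def Quasinuclear (r : Addr → Addr → Prop) : Prop :=
  ∃ Q R : Set Addr, QuasinuclearData r Q R

/-- `𝒬†`: the types of `𝒬` both of whose children lie in `𝒬`. -/
def QDagger (Q : Set Addr) : Set Addr :=
  { α ∈ Q | α ++ [false] ∈ Q ∧ α ++ [true] ∈ Q }

/-- An atomic quasinuclear type system: the nucleus `ℛ` is a single type. -/
def AtomicQuasinuclear (r : Addr → Addr → Prop) : Prop :=
  ∃ Q R : Set Addr, QuasinuclearData r Q R ∧ IsSingleType r R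

/-- `u` and `v` lie in the same tail class. -/
def TailEq (u v : Cantor) : Prop :=
  ∃ (α β : Addr) (w : Cantor), u = wcat α w ∧ v = wcat β w

/-- A point of Cantor space is rational if it is eventually periodic. -/
def EventuallyPeriodic (u : Cantor) : Prop :=
  ∃ k p : ℕ, 0 < p ∧ ∀ n : ℕ, k ≤ n → u (n + p) = u n

/-- The setwise stabilizer in Thompson's group `V` of a subset `D` of Cantor space. -/
def setStab (D : Set Cantor) : Set (Equiv.Perm Cantor) :=
  { g | IsPrefixSubst g ∧ (fun w => g w) '' D = D }

/-! ### Finite prefixes and shifts of infinite words -/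

/-- The prefix of length `n` of an infinite word. -/
def pre (u : Cantor) (n : ℕ) : Addr := (List.range n).map u

/-- The infinite word obtained by deleting the first `n` letters. -/
def drp (n : ℕ) (u : Cantor) : Cantor := fun k => u (n + k)

theorem pre_length (u : Cantor) (n : ℕ) : (pre u n).length = n := by simp [pre]

theorem pre_succ (u : Cantor) (n : ℕ) : pre u (n + 1) = pre u n ++ [u n] := by
  simp [pre, List.range_succ]

theorem pre_add (u : Cantor) (n m : ℕ) : pre u (n + m) = pre u n ++ pre (drp n u) m := by
  induction m with
  | zero => simp [pre]
  | succ m ih => rw [← Nat.add_assoc, pre_succ, ih, pre_succ, List.append_assoc]; rfl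

theorem wcat_nil (w : Cantor) : wcat [] w = w := by
  funext n; simp [wcat]

theorem wcat_append (α β : Addr) (w : Cantor) : wcat (α ++ β) w = wcat α (wcat β w) := by
  funext n
  simp only [wcat, List.length_append, List.get_eq_getElem]
  by_cases h1 : n < α.length
  · simp [h1, List.getElem_append_left, show n < α.length + β.length by omega]
  · by_cases h2 : n < α.length + β.length
    · simp [h1, h2, List.getElem_append_right (by omega : α.length ≤ n),
        show n - α.length < β.length by omega]
    · simp [h1, h2, show ¬ n - α.length < β.length by omega, Nat.sub_sub]

theorem drp_wcat (α : Addr) (w : Cantor) : drp α.length (wcat α w) = w := by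
  funext n; simp [drp, wcat]

theorem wcat_inj {α : Addr} {w w' : Cantor} (h : wcat α w = wcat α w') : w = w' := by
  rw [← drp_wcat α w, h, drp_wcat]

theorem pre_wcat_length (α : Addr) (w : Cantor) : pre (wcat α w) α.length = α := by
  apply List.ext_getElem
  · simp [pre]
  · intro i h1 h2
    simp [pre, wcat, h2]

theorem pre_wcat (α : Addr) (w : Cantor) (n : ℕ) :
    pre (wcat α w) (α.length + n) = α ++ pre w n := by
  rw [pre_add, pre_wcat_length, drp_wcat]

theorem wcat_pre_drp (u : Cantor) (n : ℕ) : wcat (pre u n) (drp n u) = u := by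
  funext k
  simp only [wcat, pre_length]
  split_ifs with h
  · simp [pre]
  · simp only [drp]; congr 1; omega

theorem pre_inj {u v : Cantor} (h : ∀ n, pre u n = pre v n) : u = v := by
  funext n
  have := h (n + 1)
  rw [pre_succ, pre_succ, h n] at this
  simpa using this

/-- Two factorizations of one infinite word have comparable prefixes. -/
theorem wcat_eq {α β : Addr} {w w' : Cantor} (h : wcat α w = wcat β w')
    (hl : α.length ≤ β.length) : ∃ γ, β = α ++ γ ∧ w = wcat γ w' := by
  obtain ⟨k, hk⟩ := Nat.exists_eq_add_of_le hl
  have h1 : β = α ++ pre w k := by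
    rw [← pre_wcat, ← hk, h, pre_wcat_length]
  refine ⟨pre w k, h1, ?_⟩
  rw [h1, wcat_append] at h
  exact wcat_inj h

theorem cone_disjoint_of_length {α β : Addr} (hl : α.length = β.length) (hne : α ≠ β) :
    Disjoint (cone α) (cone β) := by
  rw [Set.disjoint_left]
  rintro _ ⟨w, rfl⟩ ⟨w', h⟩
  apply hne
  rw [← pre_wcat_length α w, ← h, hl, pre_wcat_length]

/-! ### Thompson's group `V` as a group -/

theorem actsOn.append {g : Equiv.Perm Cantor} {α β : Addr} (h : actsOn g α β) (γ : Addr) :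
    actsOn g (α ++ γ) (β ++ γ) := by
  intro w
  rw [wcat_append, wcat_append, h]

/-- A permutation belongs to `V` exactly when it acts by prefix substitution on all
sufficiently long addresses. This form is convenient for products. -/
theorem isPrefixSubst_iff (g : Equiv.Perm Cantor) :
    IsPrefixSubst g ↔ ∃ N, ∀ α : Addr, N ≤ α.length → ∃ β, actsOn g α β := by
  constructor
  · rintro ⟨n, A, B, -, hA, -, -, hg⟩
    refine ⟨∑ i, (A i).length, fun α hα => ?_⟩
    have hx : wcat α (fun _ => false) ∈ ⋃ i, cone (A i) := by rw [hA]; trivial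
    obtain ⟨i, w, hw⟩ := Set.mem_iUnion.1 hx
    have hle : (A i).length ≤ α.length :=
      le_trans (Finset.single_le_sum (f := fun i => (A i).length)
        (fun _ _ => Nat.zero_le _) (Finset.mem_univ i)) hα
    obtain ⟨γ, rfl, -⟩ := wcat_eq hw hle
    exact ⟨B i ++ γ, actsOn.append (hg i) γ⟩
  · rintro ⟨N, h⟩
    have e : Fin (Fintype.card (List.Vector Bool N)) ≃ List.Vector Bool N :=
      (Fintype.equivFin _).symm
    have h' : ∀ v : List.Vector Bool N, ∃ β, actsOn g v.1 β := fun v => h v.1 v.2.ge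
    choose B hB using h'
    have himg : ∀ v, cone (B v) = g '' cone v.1 := by
      intro v
      ext x
      constructor
      · rintro ⟨w, rfl⟩
        exact ⟨_, ⟨w, rfl⟩, hB v w⟩
      · rintro ⟨_, ⟨w, rfl⟩, rfl⟩
        exact ⟨w, (hB v w).symm⟩
    have hdis : ∀ i j, i ≠ j → Disjoint (cone (e i).1) (cone (e j).1) := by
      intro i j hij
      apply cone_disjoint_of_length ((e i).2.trans (e j).2.symm)
      intro h
      exact hij (e.injective (Subtype.ext h))
    have hcov : (⋃ i, cone (e i).1) = Set.univ := by
      apply Set.eq_univ_of_forall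
      intro x
      refine Set.mem_iUnion.2 ⟨e.symm ⟨pre x N, pre_length x N⟩, drp N x, ?_⟩
      have h1 : (e (e.symm ⟨pre x N, pre_length x N⟩)).1 = pre x N :=
        congrArg Subtype.val (e.apply_symm_apply _)
      rw [h1]
      exact wcat_pre_drp x N
    refine ⟨_, fun i => (e i).1, fun i => B (e i), hdis, hcov, ?_, ?_, fun i w => hB _ w⟩
    · intro i j hij
      rw [himg, himg]
      exact (Set.disjoint_image_iff g.injective).2 (hdis i j hij)
    · simp only [himg]
      rw [← Set.image_iUnion, hcov, Set.image_univ, g.surjective.range_eq]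

theorem isPrefixSubst_one : IsPrefixSubst 1 :=
  (isPrefixSubst_iff 1).2 ⟨0, fun α _ => ⟨α, fun _ => rfl⟩⟩

/-- For `g ∈ V`, images of long addresses are long. -/
theorem exists_actsOn_length {g : Equiv.Perm Cantor} (hg : IsPrefixSubst g) (n : ℕ) :
    ∃ N, ∀ α : Addr, N ≤ α.length → ∃ β, actsOn g α β ∧ n ≤ β.length := by
  obtain ⟨N, h⟩ := (isPrefixSubst_iff g).1 hg
  refine ⟨N + n, fun α hα => ?_⟩
  obtain ⟨β, hβ⟩ := h (α.take N) (by simp; omega)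
  refine ⟨β ++ α.drop N, ?_, by simp; omega⟩
  have := hβ.append (α.drop N)
  rwa [List.take_append_drop] at this

theorem isPrefixSubst_mul {g h : Equiv.Perm Cantor} (hg : IsPrefixSubst g)
    (hh : IsPrefixSubst h) : IsPrefixSubst (g * h) := by
  obtain ⟨N, hN⟩ := (isPrefixSubst_iff g).1 hg
  obtain ⟨M, hM⟩ := exists_actsOn_length hh N
  refine (isPrefixSubst_iff _).2 ⟨M, fun α hα => ?_⟩
  obtain ⟨β, hβ, hl⟩ := hM α hα
  obtain ⟨γ, hγ⟩ := hN β hl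
  refine ⟨γ, fun w => ?_⟩
  rw [Equiv.Perm.mul_apply, hβ, hγ]

theorem isPrefixSubst_inv {g : Equiv.Perm Cantor} (hg : IsPrefixSubst g) :
    IsPrefixSubst g⁻¹ := by
  obtain ⟨n, A, B, h1, h2, h3, h4, h5⟩ := hg
  refine ⟨n, B, A, h3, h4, h1, h2, fun i w => ?_⟩
  rw [← h5]; simp

/-! ### Tail classes -/

theorem tailEq_iff (u v : Cantor) : TailEq u v ↔ ∃ m n, drp m u = drp n v := by
  constructor
  · rintro ⟨α, β, w, rfl, rfl⟩
    exact ⟨α.length, β.length, by rw [drp_wcat, drp_wcat]⟩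
  · rintro ⟨m, n, h⟩
    exact ⟨pre u m, pre v n, drp m u, (wcat_pre_drp _ _).symm, by rw [h, wcat_pre_drp]⟩

theorem TailEq.symm' {u v : Cantor} (h : TailEq u v) : TailEq v u := by
  obtain ⟨α, β, w, h1, h2⟩ := h
  exact ⟨β, α, w, h2, h1⟩

theorem TailEq.trans' {u v x : Cantor} (h : TailEq u v) (h' : TailEq v x) : TailEq u x := by
  rw [tailEq_iff] at *
  obtain ⟨m, n, h⟩ := h
  obtain ⟨p, q, h'⟩ := h'
  refine ⟨m + p, q + n, funext fun k => ?_⟩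
  have a := congrFun h (p + k)
  have b := congrFun h' (n + k)
  simp only [drp] at *
  rw [Nat.add_assoc, a, Nat.add_assoc, ← b]
  congr 1; omega

theorem tailEq_apply {g : Equiv.Perm Cantor} (hg : IsPrefixSubst g) (u : Cantor) :
    TailEq (g u) u := by
  obtain ⟨N, h⟩ := (isPrefixSubst_iff g).1 hg
  obtain ⟨β, hβ⟩ := h (pre u N) (pre_length u N).ge
  refine ⟨β, pre u N, drp N u, ?_, (wcat_pre_drp _ _).symm⟩
  rw [← hβ, wcat_pre_drp]

/-- Every tail class is infinite. -/
theorem exists_tailEq_notMem (d : Cantor) (F : Set Cantor) (hF : F.Finite) :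
    ∃ y, TailEq y d ∧ y ∉ F := by
  by_contra! hcon
  -- the words `0ⁿ1d` are pairwise distinct members of the tail class
  let f : ℕ → Cantor := fun n => wcat (List.replicate n false ++ [true]) d
  have hlt : ∀ m n, m < n → f m ≠ f n := by
    intro m n hmn h
    have := congrFun h m
    simp [f, wcat, hmn, show m < n + 1 by omega] at this
  have hinj : Function.Injective f := by
    intro m n h
    rcases lt_trichotomy m n with h' | h' | h'
    · exact absurd h (hlt _ _ h')
    · exact h'
    · exact absurd h.symm (hlt _ _ h')
  refine Set.infinite_range_of_injective hinj (hF.subset ?_)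
  rintro _ ⟨n, rfl⟩
  exact hcon _ ⟨_, [], d, rfl, (wcat_nil d).symm⟩

/-! ### Swaps of disjoint cones -/

open Classical in
/-- The map exchanging the cones of `α` and `β` (when these are disjoint) by prefix
substitution, and fixing all other points. -/
noncomputable def coneSwapFun (α β : Addr) (x : Cantor) : Cantor :=
  if x ∈ cone α then wcat β (drp α.length x)
  else if x ∈ cone β then wcat α (drp β.length x) else x

theorem coneSwapFun_left (α β : Addr) (w : Cantor) :
    coneSwapFun α β (wcat α w) = wcat β w := by
  have : wcat α w ∈ cone α := ⟨w, rfl⟩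
  simp [coneSwapFun, this, drp_wcat]

theorem coneSwapFun_right {α β : Addr} (h : Disjoint (cone α) (cone β)) (w : Cantor) :
    coneSwapFun α β (wcat β w) = wcat α w := by
  have h1 : wcat β w ∈ cone β := ⟨w, rfl⟩
  have h2 : wcat β w ∉ cone α := fun h' => Set.disjoint_left.1 h h' h1
  simp [coneSwapFun, h1, h2, drp_wcat]

theorem coneSwapFun_other {α β : Addr} {x : Cantor} (h1 : x ∉ cone α) (h2 : x ∉ cone β) :
    coneSwapFun α β x = x := by
  simp [coneSwapFun, h1, h2]

theorem coneSwapFun_invol {α β : Addr} (h : Disjoint (cone α) (cone β)) :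
    Function.Involutive (coneSwapFun α β) := by
  intro x
  by_cases h1 : x ∈ cone α
  · obtain ⟨w, rfl⟩ := h1
    rw [coneSwapFun_left, coneSwapFun_right h]
  · by_cases h2 : x ∈ cone β
    · obtain ⟨w, rfl⟩ := h2
      rw [coneSwapFun_right h, coneSwapFun_left]
    · rw [coneSwapFun_other h1 h2, coneSwapFun_other h1 h2]

theorem isPrefixSubst_coneSwap {α β : Addr} (h : Disjoint (cone α) (cone β)) :
    IsPrefixSubst (coneSwapFun_invol h).toPerm := by
  refine (isPrefixSubst_iff _).2 ⟨α.length + β.length, fun γ hγ => ?_⟩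
  by_cases h1 : ∃ δ, γ = α ++ δ
  · obtain ⟨δ, rfl⟩ := h1
    exact ⟨β ++ δ, actsOn.append (fun w => coneSwapFun_left α β w) δ⟩
  · by_cases h2 : ∃ δ, γ = β ++ δ
    · obtain ⟨δ, rfl⟩ := h2
      exact ⟨α ++ δ, actsOn.append (fun w => coneSwapFun_right h w) δ⟩
    · refine ⟨γ, fun w => coneSwapFun_other ?_ ?_⟩
      · rintro ⟨w', hw⟩
        obtain ⟨δ, hδ, -⟩ := wcat_eq hw (by omega)
        exact h1 ⟨δ, hδ⟩
      · rintro ⟨w', hw⟩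
        obtain ⟨δ, hδ, -⟩ := wcat_eq hw (by omega)
        exact h2 ⟨δ, hδ⟩

/-- A point outside a finite set is separated from it by all its long prefixes. -/
theorem exists_pre_sep (x : Cantor) (F : Set Cantor) (hF : F.Finite) (hx : x ∉ F) :
    ∃ N, ∀ n, N ≤ n → ∀ z ∈ F, z ∉ cone (pre x n) := by
  have h : ∀ z ∈ F, ∃ k, z k ≠ x k := by
    intro z hz
    by_contra! hcon
    exact hx (funext hcon ▸ hz)
  choose! k hk using h
  obtain ⟨N, hN⟩ := (hF.image k).bddAbove
  refine ⟨N + 1, fun n hn z hz => ?_⟩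
  rintro ⟨w, hw⟩
  have hkn : k z < n := by
    have := hN ⟨z, hz, rfl⟩
    omega
  apply hk z hz
  have h1 := congrFun hw (k z)
  simp only [wcat, pre_length, hkn, dif_pos] at h1
  rw [← h1]
  simp [pre]

/-- Two points of the same tail class can be exchanged by an element of `V` fixing a
prescribed finite set of other points. -/
theorem exists_point_swap {x y : Cantor} (hxy : TailEq x y) (hne : x ≠ y) (F : Set Cantor)
    (hF : F.Finite) (hx : x ∉ F) (hy : y ∉ F) :
    ∃ g, IsPrefixSubst g ∧ g x = y ∧ g y = x ∧ ∀ z ∈ F, g z = z := by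
  obtain ⟨m, n, h⟩ := (tailEq_iff x y).1 hxy
  obtain ⟨N, hN⟩ := exists_pre_sep x (insert y F) (hF.insert y) (by simp [hne, hx])
  obtain ⟨M, hM⟩ := exists_pre_sep y (insert x F) (hF.insert x) (by simp [Ne.symm hne, hy])
  have hN' := hN (m + (N + M)) (by omega)
  have hM' := hM (n + (N + M)) (by omega)
  have htail : drp (m + (N + M)) x = drp (n + (N + M)) y := by
    funext k
    have := congrFun h (N + M + k)
    simp only [drp] at *
    rw [Nat.add_assoc, this]
    congr 1; omega
  have ex := wcat_pre_drp x (m + (N + M))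
  have ey := wcat_pre_drp y (n + (N + M))
  rw [← htail] at ey
  generalize hα : pre x (m + (N + M)) = α at *
  generalize hβ : pre y (n + (N + M)) = β at *
  generalize drp (m + (N + M)) x = w at *
  have hdis : Disjoint (cone α) (cone β) := by
    rw [Set.disjoint_left]
    rintro _ ⟨u, rfl⟩ ⟨v, hv⟩
    rcases le_total α.length β.length with hl | hl
    · obtain ⟨γ, rfl, -⟩ := wcat_eq hv.symm hl
      exact hN' y (by simp) ⟨wcat γ w, by rw [← wcat_append, ey]⟩
    · obtain ⟨γ, rfl, -⟩ := wcat_eq hv hl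
      exact hM' x (by simp) ⟨wcat γ w, by rw [← wcat_append, ex]⟩
  refine ⟨_, isPrefixSubst_coneSwap hdis, ?_, ?_, ?_⟩
  · rw [← ex, ← ey]; exact coneSwapFun_left α β w
  · rw [← ex, ← ey]; exact coneSwapFun_right hdis w
  · intro z hz
    exact coneSwapFun_other (hN' z (by simp [hz])) (hM' z (by simp [hz]))

/-! ### Maximality of stabilizers of finite subsets of a tail class -/

theorem isSubgroupSet_setStab (D : Set Cantor) : IsSubgroupSet (setStab D) := by
  refine ⟨⟨isPrefixSubst_one, by simp⟩, ?_, ?_⟩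
  · rintro g ⟨hg, hgD⟩ h ⟨hh, hhD⟩
    refine ⟨isPrefixSubst_mul hg hh, ?_⟩
    calc (fun w => (g * h) w) '' D = (fun w => g w) '' ((fun w => h w) '' D) := by
          rw [Set.image_image]; rfl
      _ = D := by rw [hhD, hgD]
  · rintro g ⟨hg, hgD⟩
    refine ⟨isPrefixSubst_inv hg, ?_⟩
    conv_lhs => rw [← hgD]
    rw [Set.image_image]
    simp

theorem mem_setStab_of_forall {D : Set Cantor} (hD : D.Finite) {g : Equiv.Perm Cantor}
    (hg : IsPrefixSubst g) (h : ∀ x ∈ D, g x ∈ D) : g ∈ setStab D := by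
  refine ⟨hg, ?_⟩
  refine Set.eq_of_subset_of_ncard_le (by rintro _ ⟨x, hx, rfl⟩; exact h x hx) ?_ hD
  rw [Set.ncard_image_of_injective D g.injective]

/-- The setwise stabilizer of a finite nonempty subset `D` of a tail class is maximal in `V`.
If `H` contains it properly, some `h ∈ H` moves a point `x ∈ D` out of `D`; conjugating by `h` a
swap of `h x` with a far away point gives an element of `H` moving exactly one point of `D`.
Hence the `H`-orbit of `D` contains all sets obtained by exchanging one point, and then every
subset of the tail class of the same size as `D`, so `H` is all of `V`. -/
theorem isMaximal_setStab (D : Set Cantor) (hD : D.Finite) (hne : D.Nonempty)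
    (htail : ∀ u ∈ D, ∀ v ∈ D, TailEq u v) : IsMaximalSubgroupOfV (setStab D) := by
  classical
  obtain ⟨d, hd⟩ := hne
  refine ⟨isSubgroupSet_setStab D, fun g hg => hg.1, ?_, ?_⟩
  · intro heq
    obtain ⟨y, hy, hyD⟩ := exists_tailEq_notMem d D hD
    obtain ⟨g, hg, hgd, -, -⟩ := exists_point_swap hy.symm' (by rintro rfl; exact hyD hd) ∅
      Set.finite_empty (by simp) (by simp)
    have : g ∈ setStab D := by rw [heq]; exact hg
    apply hyD
    rw [← this.2]
    exact ⟨d, hd, hgd⟩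
  · intro H hH hMH hHV
    by_cases hHM : H ⊆ setStab D
    · exact Or.inl (Set.Subset.antisymm hHM hMH)
    right
    have hdX : ∀ u ∈ D, TailEq u d := fun u hu => htail u hu d hd
    -- an element of `H` moving exactly one point of `D`
    have step0 : ∃ k ∈ H, ∃ x ∈ D, ∃ y ∉ D, TailEq y d ∧ k x = y ∧ ∀ z ∈ D, z ≠ x → k z = z := by
      obtain ⟨h, hh, hns⟩ := Set.not_subset.1 hHM
      have hhV : IsPrefixSubst h := hHV hh
      have : ∃ x ∈ D, h x ∉ D := by
        by_contra! hcon
        exact hns (mem_setStab_of_forall hD hhV hcon)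
      obtain ⟨x, hx, hhx⟩ := this
      obtain ⟨y, hy, hyF⟩ := exists_tailEq_notMem d (D ∪ h '' D) (hD.union (hD.image h))
      obtain ⟨hyD, hyhD⟩ := not_or.1 hyF
      have hhxt : TailEq (h x) d := (tailEq_apply hhV x).trans' (hdX x hx)
      -- a swap moving only `h x` among the points of `D ∪ h D`
      obtain ⟨g, hg, g1, g2, g3⟩ := exists_point_swap (hhxt.trans' hy.symm')
        (by rintro rfl; exact hyhD ⟨x, hx, rfl⟩) ((D ∪ h '' D) \ {h x})
        ((hD.union (hD.image h)).subset Set.sdiff_subset) (by simp) (fun h' => hyF h'.1)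
      have hgD : g ∈ setStab D := by
        apply mem_setStab_of_forall hD hg
        intro z hz
        rw [g3 z ⟨Or.inl hz, by rintro rfl; exact hhx hz⟩]
        exact hz
      refine ⟨h⁻¹ * (g * h), hH.2.1 _ (hH.2.2 _ hh) _ (hH.2.1 _ (hMH hgD) _ hh), x, hx,
        h⁻¹ y, ?_, ?_, ?_, ?_⟩
      · intro h'
        exact hyhD ⟨_, h', by simp⟩
      · exact (tailEq_apply (isPrefixSubst_inv hhV) y).trans' hy
      · simp [g1]
      · intro z hz hzx
        have : g (h z) = h z := g3 _ ⟨Or.inr ⟨z, hz, rfl⟩, fun h' => hzx (h.injective h')⟩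
        simp [this]
    -- the point moved and its image are arbitrary
    have step1 : ∀ x ∈ D, ∀ y ∉ D, TailEq y d →
        ∃ k ∈ H, k x = y ∧ ∀ z ∈ D, z ≠ x → k z = z := by
      obtain ⟨k, hk, x₀, hx₀, y₀, hy₀, hy₀t, kx, kz⟩ := step0
      intro x hx y hy hyt
      have hp : ∃ p ∈ setStab D, p x = x₀ := by
        by_cases hxx : x = x₀
        · exact ⟨1, (isSubgroupSet_setStab D).1, hxx⟩
        obtain ⟨p, hp, p1, p2, p3⟩ := exists_point_swap (htail x hx x₀ hx₀) hxx (D \ {x, x₀})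
          (hD.subset Set.sdiff_subset) (by simp) (by simp)
        refine ⟨p, mem_setStab_of_forall hD hp fun z hz => ?_, p1⟩
        by_cases h1 : z = x
        · rw [h1, p1]; exact hx₀
        by_cases h2 : z = x₀
        · rw [h2, p2]; exact hx
        rw [p3 z ⟨hz, by simp [h1, h2]⟩]; exact hz
      obtain ⟨p, hp, px⟩ := hp
      have hpD : ∀ z, p z ∈ D ↔ z ∈ D := by
        intro z
        constructor
        · intro h
          rw [← hp.2] at h
          obtain ⟨u, hu, hu'⟩ := h
          rwa [← p.injective hu']
        · intro h
          rw [← hp.2]; exact ⟨z, h, rfl⟩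
      -- `p⁻¹kp` moves `x` to `p⁻¹ y₀` and fixes the rest of `D`; `q` corrects the image of `x`
      have hy₁ : p⁻¹ y₀ ∉ D := by
        rw [← hpD]; simpa using hy₀
      have hy₁t : TailEq (p⁻¹ y₀) d :=
        (tailEq_apply (isPrefixSubst_inv hp.1) y₀).trans' hy₀t
      have hq : ∃ q, IsPrefixSubst q ∧ q (p⁻¹ y₀) = y ∧ ∀ z ∈ D, q z = z := by
        by_cases hyy : p⁻¹ y₀ = y
        · exact ⟨1, isPrefixSubst_one, hyy, fun _ _ => rfl⟩
        obtain ⟨q, hq, q1, -, q3⟩ :=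
          exists_point_swap (hy₁t.trans' hyt.symm') hyy D hD hy₁ hy
        exact ⟨q, hq, q1, q3⟩
      obtain ⟨q, hq, qy, qz⟩ := hq
      have hqD : q ∈ setStab D := mem_setStab_of_forall hD hq fun z hz => by
        rw [qz z hz]; exact hz
      refine ⟨q * (p⁻¹ * (k * p)), hH.2.1 _ (hMH hqD) _ (hH.2.1 _ (hH.2.2 _ (hMH hp)) _
        (hH.2.1 _ hk _ (hMH hp))), ?_, ?_⟩
      · simp only [Equiv.Perm.mul_apply, px, kx, qy]
      · intro z hz hzx
        have h1 : k (p z) = p z :=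
          kz _ ((hpD z).2 hz) fun h' => hzx (p.injective (h'.trans px.symm))
        simp [h1, qz z hz]
    -- by conjugation, the `H`-orbit of `D` is closed under exchanging one point
    have step2 : ∀ E : Set Cantor, (∃ k ∈ H, (fun w => k w) '' D = E) → ∀ x ∈ E, ∀ y ∉ E,
        TailEq y d → ∃ k ∈ H, (fun w => k w) '' D = insert y (E \ {x}) := by
      rintro _ ⟨k, hk, rfl⟩ _ ⟨x, hx, rfl⟩ y hy hyt
      have hkV : IsPrefixSubst k := hHV hk
      obtain ⟨s, hs, sx, sz⟩ := step1 x hx (k⁻¹ y) (fun h' => hy ⟨_, h', by simp⟩)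
        ((tailEq_apply (isPrefixSubst_inv hkV) y).trans' hyt)
      refine ⟨k * s, hH.2.1 _ hk _ hs, ?_⟩
      ext z
      constructor
      · rintro ⟨u, hu, rfl⟩
        by_cases hux : u = x
        · left; simp [hux, sx]
        · right
          simp only [Equiv.Perm.mul_apply, sz u hu hux]
          exact ⟨⟨u, hu, rfl⟩, fun h' => hux (k.injective h')⟩
      · rintro (rfl | ⟨⟨u, hu, rfl⟩, hux⟩)
        · exact ⟨x, hx, by simp [sx]⟩
        · refine ⟨u, hu, ?_⟩
          have : u ≠ x := by rintro rfl; exact hux rfl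
          simp [sz u hu this]
    -- induction on the number of points of `E` outside `D`
    have step3 : ∀ (n : ℕ) (E : Set Cantor), E.Finite → E.ncard = D.ncard →
        (∀ u ∈ E, TailEq u d) → (E \ D).ncard = n → ∃ k ∈ H, (fun w => k w) '' D = E := by
      intro n
      induction n with
      | zero =>
        intro E hE hcard _ hn
        have hsub : E ⊆ D := by
          rw [Set.ncard_eq_zero (hE.subset Set.sdiff_subset)] at hn
          exact Set.sdiff_eq_empty.1 hn
        rw [Set.eq_of_subset_of_ncard_le hsub hcard.ge hD]
        exact ⟨1, hH.1, by simp⟩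
      | succ n ih =>
        intro E hE hcard hEt hn
        obtain ⟨e, heE, heD⟩ : (E \ D).Nonempty := by
          rw [← Set.ncard_pos (hE.subset Set.sdiff_subset)]; omega
        obtain ⟨c, hcD, hcE⟩ : ∃ c ∈ D, c ∉ E := by
          by_contra! hcon
          exact heD (Set.eq_of_subset_of_ncard_le hcon hcard.le hE ▸ heE)
        have hce : c ≠ e := by rintro rfl; exact hcE heE
        have hE' : ∃ k ∈ H, (fun w => k w) '' D = insert c (E \ {e}) := by
          apply ih
          · exact (hE.subset Set.sdiff_subset).insert c
          · rw [Set.ncard_insert_of_notMem (fun h' => hcE h'.1)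
              (hE.subset Set.sdiff_subset), Set.ncard_sdiff_singleton_add_one heE hE, hcard]
          · rintro u (rfl | hu)
            · exact hdX _ hcD
            · exact hEt u hu.1
          · have : insert c (E \ {e}) \ D = (E \ D) \ {e} := by
              ext z
              simp only [Set.mem_sdiff, Set.mem_insert_iff, Set.mem_singleton_iff]
              constructor
              · rintro ⟨rfl | ⟨h1, h2⟩, h3⟩
                · exact absurd hcD h3
                · exact ⟨⟨h1, h3⟩, h2⟩
              · rintro ⟨⟨h1, h3⟩, h2⟩
                exact ⟨Or.inr ⟨h1, h2⟩, h3⟩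
            rw [this]
            have := Set.ncard_sdiff_singleton_add_one (show e ∈ E \ D from ⟨heE, heD⟩)
              (hE.subset Set.sdiff_subset)
            omega
        have := step2 _ hE' c (by simp) e (by simp [hce.symm]) (hEt e heE)
        have heq : insert e (insert c (E \ {e}) \ {c}) = E := by
          ext z
          simp only [Set.mem_sdiff, Set.mem_insert_iff, Set.mem_singleton_iff]
          constructor
          · rintro (rfl | ⟨rfl | h1, h2⟩)
            · exact heE
            · exact absurd rfl h2
            · exact h1.1
          · intro hz
            by_cases hze : z = e
            · exact Or.inl hze
            · exact Or.inr ⟨Or.inr ⟨hz, hze⟩, by rintro rfl; exact hcE hz⟩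
        rwa [heq] at this
    refine Set.Subset.antisymm hHV fun v hv => ?_
    obtain ⟨k, hk, hkD⟩ := step3 _ ((fun w => v w) '' D) (hD.image _)
      (Set.ncard_image_of_injective D v.injective)
      (by rintro _ ⟨u, hu, rfl⟩; exact (tailEq_apply hv u).trans' (hdX u hu)) rfl
    have hmem : k⁻¹ * v ∈ setStab D := by
      apply mem_setStab_of_forall hD (isPrefixSubst_mul (isPrefixSubst_inv (hHV hk)) hv)
      intro x hx
      have : v x ∈ (fun w => k w) '' D := by rw [hkD]; exact ⟨x, hx, rfl⟩
      obtain ⟨u, hu, hux⟩ := this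
      simp only at hux
      rw [Equiv.Perm.mul_apply, ← hux]
      simpa using hu
    have := hH.2.1 _ hk _ (hMH hmem)
    rwa [mul_inv_cancel_left] at this

/-! ### The limit points of the types in `𝒬` -/

/-- The points of Cantor space all of whose prefixes of length at least `t` lie in `Q`. -/
def limitSet (Q : Set Addr) (t : ℕ) : Set Cantor := { u | ∀ n, t ≤ n → pre u n ∈ Q }

theorem childClosed_append {S : Set Addr} (hS : ChildClosed S) {α : Addr} (hα : α ∈ S)
    (γ : Addr) : α ++ γ ∈ S := by
  induction γ generalizing α with
  | nil => simpa using hα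
  | cons b γ ih =>
    have : α ++ [b] ∈ S := by
      cases b
      · exact (hS α hα).1
      · exact (hS α hα).2
    simpa using ih this

theorem coherent_append {r : Addr → Addr → Prop} (hr : Coherent r) {α β : Addr} (h : r α β)
    (γ : Addr) : r (α ++ γ) (β ++ γ) := by
  induction γ generalizing α β with
  | nil => simpa using h
  | cons b γ ih =>
    have : r (α ++ [b]) (β ++ [b]) := by
      cases b
      · exact (hr α β h).1
      · exact (hr α β h).2
    simpa using ih this

theorem mem_limitSet_iff {Q R : Set Addr} {t : ℕ} (hdis : Disjoint Q R)
    (hQR : ∀ α : Addr, t ≤ α.length → α ∈ Q ∪ R) (hR : ChildClosed R) (u : Cantor) :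
    u ∈ limitSet Q t ↔ ∃ N, ∀ n, N ≤ n → pre u n ∈ Q := by
  constructor
  · exact fun h => ⟨t, h⟩
  · rintro ⟨N, h⟩ n hn
    rcases hQR (pre u n) (by rwa [pre_length]) with h' | h'
    · exact h'
    · have h1 := childClosed_append hR h' (pre (drp n u) N)
      rw [← pre_add] at h1
      exact absurd h1 (Set.disjoint_left.1 hdis (h _ (by omega)))

/-- In the nonbranching case a point of the limit set is determined by its prefix of
length `t`. -/
theorem limitSet_ext {Q : Set Addr} {t : ℕ} (hQ : QDagger Q = ∅) {u v : Cantor}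
    (hu : u ∈ limitSet Q t) (hv : v ∈ limitSet Q t) (h : pre u t = pre v t) : u = v := by
  have key : ∀ m, pre u (t + m) = pre v (t + m) := by
    intro m
    induction m with
    | zero => exact h
    | succ m ih =>
      rw [← Nat.add_assoc, pre_succ, pre_succ, ih]
      by_contra hne
      have hne' : u (t + m) ≠ v (t + m) := fun h' => hne (by rw [h'])
      have h1 := hu (t + m + 1) (by omega)
      have h2 := hv (t + m + 1) (by omega)
      have h3 := hv (t + m) (by omega)
      rw [pre_succ, ih] at h1
      rw [pre_succ] at h2
      have : pre v (t + m) ∈ QDagger Q := by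
        refine ⟨h3, ?_⟩
        generalize u (t + m) = a at *
        generalize v (t + m) = b at *
        cases a <;> cases b <;> simp_all
      rw [hQ] at this
      exact this
  have h2 : drp t u = drp t v := by
    apply pre_inj
    intro n
    have := key n
    rw [pre_add, pre_add, h] at this
    exact List.append_cancel_left this
  rw [← wcat_pre_drp u t, ← wcat_pre_drp v t, h, h2]

theorem finite_limitSet {Q : Set Addr} {t : ℕ} (hQ : QDagger Q = ∅) :
    (limitSet Q t).Finite := by
  apply Set.Finite.of_finite_image (f := fun u => pre u t)
  · exact (List.finite_length_eq Bool t).subset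
      (by rintro _ ⟨u, -, rfl⟩; exact pre_length u t)
  · intro u hu v hv h
    exact limitSet_ext hQ hu hv h

theorem exists_child {r : Addr → Addr → Prop} {Q : Set Addr} (hQ : StronglyConnected r Q)
    {α : Addr} (hα : α ∈ Q) : ∃ b, α ++ [b] ∈ Q := by
  obtain ⟨γ, hγ, hp, -⟩ := hQ α hα α hα
  cases γ with
  | nil => exact absurd rfl hγ
  | cons b γ => exact ⟨b, hp [b] ⟨γ, rfl⟩⟩

/-- Every address in `Q` extends to an infinite path through `Q`. -/
theorem exists_path {r : Addr → Addr → Prop} {Q : Set Addr} (hQ : StronglyConnected r Q)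
    {α : Addr} (hα : α ∈ Q) : ∃ w : Cantor, ∀ n, α ++ pre w n ∈ Q := by
  have h : ∀ β : Q, ∃ b, β.1 ++ [b] ∈ Q := fun β => exists_child hQ β.2
  choose f hf using h
  let a : ℕ → Q := fun n => Nat.rec ⟨α, hα⟩ (fun _ β => ⟨β.1 ++ [f β], hf β⟩) n
  have ha : ∀ n, α ++ pre (fun n => f (a n)) n = (a n).1 := by
    intro n
    induction n with
    | zero => simp [pre, a]
    | succ n ih => rw [pre_succ, ← List.append_assoc, ih]
  exact ⟨fun n => f (a n), fun n => by rw [ha]; exact (a n).2⟩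

/-- If a simple type system is atomic quasinuclear but not
branching, then `Stab_V(𝒫)` is the setwise stabilizer of a finite set of rational
points of Cantor space of the same tail class, and this is a maximal subgroup of
Thompson's group `V`. -/
theorem stabSet_of_nonbranching_atomicQuasinuclear
    (r : Addr → Addr → Prop) (hr : SimpleTS r)
    (h : ∃ Q R : Set Addr, QuasinuclearData r Q R ∧ IsSingleType r R ∧
      QDagger Q = ∅) :
    ∃ D : Set Cantor, D.Finite ∧ D.Nonempty ∧
      (∀ u ∈ D, EventuallyPeriodic u) ∧ (∀ u ∈ D, ∀ v ∈ D, TailEq u v) ∧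
      StabSet r = setStab D ∧ IsMaximalSubgroupOfV (setStab D) := by
  classical
  obtain ⟨Q, R, ⟨hQne, hRne, hQs, hRs, hdis, ⟨t, -, hQR⟩, ⟨-, -, hRc, -⟩, hQsc, hQRc, -⟩,
    ⟨ρ, hρ⟩, hdag⟩ := h
  obtain ⟨⟨heq, hcoh, hred⟩, -, hsimple⟩ := hr
  have hmem := mem_limitSet_iff hdis hQR hRc
  have hmemQ : ∀ α ∈ Q, ∃ w, wcat α w ∈ limitSet Q t := by
    intro α hα
    obtain ⟨w, hw⟩ := exists_path hQsc hα
    refine ⟨w, (hmem _).2 ⟨α.length, fun n hn => ?_⟩⟩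
    obtain ⟨k, rfl⟩ := Nat.exists_eq_add_of_le hn
    rw [pre_wcat]
    exact hw k
  have hmemR : ∀ α ∈ R, ∀ w, wcat α w ∉ limitSet Q t := by
    intro α hα w h
    have h1 := h (α.length + t) (by omega)
    rw [pre_wcat] at h1
    exact Set.disjoint_left.1 hdis h1 (childClosed_append hRc hα _)
  have htrans : ∀ α β, r α β → ∀ w, wcat α w ∈ limitSet Q t → wcat β w ∈ limitSet Q t := by
    intro α β h w hw
    refine (hmem _).2 ⟨β.length + t, fun n hn => ?_⟩
    obtain ⟨k, rfl⟩ := Nat.exists_eq_add_of_le (show β.length ≤ n by omega)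
    rw [pre_wcat]
    have h1 := hw (α.length + k) (by omega)
    rw [pre_wcat] at h1
    exact hQs _ h1 _ (coherent_append hcoh h _)
  -- equality of the traces of the limit set on cones is a non-universal quotient of `r`, hence
  -- equal to `r` by simplicity
  have hcone : ∀ α β, (∀ w, wcat α w ∈ limitSet Q t ↔ wcat β w ∈ limitSet Q t) ↔ r α β := by
    have hts : IsTypeSystem
        (fun α β => ∀ w, wcat α w ∈ limitSet Q t ↔ wcat β w ∈ limitSet Q t) := by
      refine ⟨⟨fun _ _ => Iff.rfl, fun h w => (h w).symm, fun h h' w => (h w).trans (h' w)⟩,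
        ?_, ?_⟩
      · intro α β h
        constructor <;> intro w <;> rw [wcat_append, wcat_append] <;> exact h _
      · intro α β h0 h1 w
        have hw : w = wcat [w 0] (drp 1 w) := by
          exact (wcat_pre_drp w 1).symm
        rw [hw, ← wcat_append, ← wcat_append]
        cases w 0
        · exact h0 _
        · exact h1 _
    rcases hsimple _ ⟨hts, fun α β h w =>
      ⟨htrans α β h w, htrans β α (heq.symm h) w⟩⟩ with h | h
    · exact h
    · exfalso
      obtain ⟨α, hα⟩ := hQne
      obtain ⟨β, hβ⟩ := hRne
      obtain ⟨w, hw⟩ := hmemQ α hα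
      exact hmemR β hβ w ((h α β w).1 hw)
  have hfin : (limitSet Q t).Finite := finite_limitSet hdag
  have hne : (limitSet Q t).Nonempty := by
    obtain ⟨α, hα⟩ := hQne
    obtain ⟨w, hw⟩ := hmemQ α hα
    exact ⟨_, hw⟩
  -- the unique path from the prefix of `u` runs through the type of the prefix of `v`
  have hpath : ∀ u ∈ limitSet Q t, ∀ v ∈ limitSet Q t,
      ∃ γ : Addr, γ ≠ [] ∧ u = wcat (pre u t ++ γ) (drp t v) := by
    intro u hu v hv
    obtain ⟨γ, hγ, -, hr⟩ := hQsc _ (hu t le_rfl) _ (hv t le_rfl)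
    refine ⟨γ, hγ, limitSet_ext hdag hu ?_ ?_⟩
    · apply htrans _ _ (heq.symm hr)
      rwa [wcat_pre_drp]
    · have := pre_wcat_length (pre u t) (wcat γ (drp t v))
      rw [pre_length] at this
      rw [wcat_append, this]
  have htail : ∀ u ∈ limitSet Q t, ∀ v ∈ limitSet Q t, TailEq u v := by
    intro u hu v hv
    obtain ⟨γ, -, h⟩ := hpath u hu v hv
    exact ⟨_, pre v t, drp t v, h, (wcat_pre_drp v t).symm⟩
  refine ⟨limitSet Q t, hfin, hne, ?_, htail, ?_, isMaximal_setStab _ hfin hne htail⟩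
  · intro u hu
    obtain ⟨γ, hγ, h⟩ := hpath u hu u hu
    refine ⟨t, γ.length, List.length_pos_iff.2 hγ, fun n hn => ?_⟩
    conv_lhs => rw [h]
    simp only [wcat, List.length_append, pre_length, drp]
    rw [dif_neg (by omega)]
    congr 1; omega
  · ext g
    constructor
    · rintro ⟨hg, Ω₀, hΩ, hdef, hst⟩
      apply mem_setStab_of_forall hfin hg
      intro u hu
      by_contra hgu
      obtain ⟨n, hn, hnQ⟩ : ∃ n, t ≤ n ∧ pre (g u) n ∉ Q := by
        simpa [limitSet] using hgu
      have hnR : pre (g u) n ∈ R := (hQR _ (by rwa [pre_length])).resolve_left hnQ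
      obtain ⟨M, hM⟩ := exists_actsOn_length hg n
      obtain ⟨L, hL⟩ := (hΩ.image List.length).bddAbove
      have hbig : ∀ α : Addr, L < α.length → α ∈ Ω₀ := by
        intro α hα
        by_contra h'
        have := hL ⟨α, h', rfl⟩
        omega
      -- a long prefix `α` of `u`, whose image `β` is a long prefix of `g u`
      obtain ⟨α, hα, hlen⟩ : ∃ α, α = pre u (t + M + L + 1) ∧ α.length = t + M + L + 1 :=
        ⟨_, rfl, pre_length _ _⟩
      have hαQ : α ∈ Q := by rw [hα]; exact hu _ (by omega)
      obtain ⟨β, hβ, hβn⟩ := hM α (by omega)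
      have hβR : β ∈ R := by
        have h1 : g u = wcat β (drp (t + M + L + 1) u) := by
          rw [← hβ, hα, wcat_pre_drp]
        have h2 : wcat (pre (g u) n) (drp n (g u)) = wcat β (drp (t + M + L + 1) u) := by
          rw [wcat_pre_drp, ← h1]
        obtain ⟨γ, hγ, -⟩ := wcat_eq h2 (by rwa [pre_length])
        rw [hγ]
        exact childClosed_append hRc hnR γ
      -- both children of `β` have the type `R`, so the children of `α` have equal types,
      -- whereas exactly one of them lies in `Q`
      have hββ : r (β ++ [false]) (β ++ [true]) := by
        have h0 := (hRc β hβR).1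
        have h1 := (hRc β hβR).2
        rw [hρ] at h0 h1
        exact heq.trans (heq.symm h0) h1
      have hαα : r (α ++ [false]) (α ++ [true]) :=
        (hst _ (hbig _ (by simp; omega)) _ (hbig _ (by simp; omega)) _ _
          (hβ.append _) (hβ.append _)).2 hββ
      have hboth : α ∈ QDagger Q := by
        obtain ⟨b, hb⟩ := exists_child hQsc hαQ
        cases b
        · exact ⟨hαQ, hb, hQs _ hb _ hαα⟩
        · exact ⟨hαQ, hQs _ hb _ (heq.symm hαα), hb⟩
      rw [hdag] at hboth
      exact hboth
    · rintro ⟨hg, hgD⟩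
      obtain ⟨N, hN⟩ := (isPrefixSubst_iff g).1 hg
      refine ⟨hg, { α | N ≤ α.length }, ?_, hN, ?_⟩
      · refine (List.finite_length_lt Bool N).subset fun α hα => ?_
        simpa using hα
      · intro α _ α' _ β β' h h'
        have himg : ∀ x, g x ∈ limitSet Q t ↔ x ∈ limitSet Q t := by
          intro x
          conv_lhs => rw [← hgD]
          exact g.injective.mem_set_image
        rw [← hcone, ← hcone]
        refine forall_congr' fun w => ?_
        rw [← h w, ← h' w, himg, himg]
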